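/- Let N ≥ 3, α ∈ (0, N), (N+α)/N < p < (N+α)/(N−2), and b > −(N−2)²/4. Then there exists a constant C > 0 such that for every smooth compactly supported u : ℝ^N → ℂ, ∫_{ℝ^N} (I_α ∗ |u|^p)(x) |u(x)|^p dx ≤ C ‖u‖_{L²}^{N+α−Np+2p} ( ∫_{ℝ^N} ( |∇u(x)|² + b |u(x)|²/|x|² ) dx )^{(Np−N−α)/2}. -/

import Mathlib

open MeasureTheory Real
open scoped BigOperators

/-- The squared Euclidean norm of the gradient: `∑ i |∂ᵢ u(x)|²`. -/
noncomputable def gradSq {N : ℕ} {F : Type*} [NormedAddCommGroup F] [NormedSpace ℝ F]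
    (u : EuclideanSpace ℝ (Fin N) → F) (x : EuclideanSpace ℝ (Fin N)) : ℝ :=
  ∑ i, ‖fderiv ℝ u x (EuclideanSpace.single i 1)‖ ^ 2

/-- The normalization constant `𝒜 = Γ((N−α)/2) / (Γ(α/2) π^{N/2} 2^α)` of
the Riesz potential `I_α(x) = 𝒜 |x|^{α−N}`. -/
noncomputable def rieszConst (N : ℕ) (α : ℝ) : ℝ :=
  Real.Gamma (((N : ℝ) - α) / 2) /
    (Real.Gamma (α / 2) * Real.pi ^ ((N : ℝ) / 2) * 2 ^ α)

/-- The Riesz convolution `(I_α ∗ |u|^p)(x) = ∫ I_α(x−y) |u(y)|^p dy`. -/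
noncomputable def rieszConv (N : ℕ) (α p : ℝ) (u : EuclideanSpace ℝ (Fin N) → ℂ)
    (x : EuclideanSpace ℝ (Fin N)) : ℝ :=
  ∫ y, rieszConst N α * ‖x - y‖ ^ (α - (N : ℝ)) * ‖u y‖ ^ p

/-- The Choquard nonlocal term `∫ (I_α ∗ |u|^p)(x) |u(x)|^p dx`. -/
noncomputable def choquardTerm (N : ℕ) (α p : ℝ)
    (u : EuclideanSpace ℝ (Fin N) → ℂ) : ℝ :=
  ∫ x, rieszConv N α p u x * ‖u x‖ ^ p

/-- The `H¹` norm `(∫ (|u|² + |∇u|²))^{1/2}`. -/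
noncomputable def H1Norm {N : ℕ} (u : EuclideanSpace ℝ (Fin N) → ℂ) : ℝ :=
  Real.sqrt (∫ x, (‖u x‖ ^ 2 + gradSq u x))

/-!
Split the kernel `|x - y| ^ (-lam)` of the Riesz energy `∫∫ f x * f y * |x - y| ^ (-lam)` at the
unit ball. If `∫ f ^ a ≤ 1` and `∫ f ^ b ≤ 1` for exponents `a < s < b` around the critical one,
`2 / s + lam / n = 2`, then weighted AM–GM with an exponent `q` slightly above `s` bounds the near
part of the energy, and with `q` slightly below `s` the far part. Changing the amplitude of `f` and
dilating it removes the normalization and gives an interpolated Hardy–Littlewood–Sobolev inequality.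
For `f = |u| ^ p` the two moments can be taken to be `∫ |u| ^ 2` and `∫ |u| ^ (2 * n / (n - 2))`,
and the Sobolev inequality bounds the latter by the gradient. Hardy's inequality makes the quadratic
form of `-Δ + b / |x| ^ 2` coercive; it comes from integrating `x · ∇(|u| ^ 2 / (|x| ^ 2 + ε))` by
parts and letting `ε → 0`.
-/

open Set Metric Module Filter Topology
open scoped ENNReal NNReal

section RieszEnergy

theorem ennreal_rpow_mul_rpow_mul_rpow_le_add {w₁ w₂ w₃ : ℝ} (h₁ : 0 ≤ w₁) (h₂ : 0 ≤ w₂)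
    (h₃ : 0 ≤ w₃) (hw : w₁ + w₂ + w₃ = 1) (x y z : ℝ≥0∞) :
    x ^ w₁ * y ^ w₂ * z ^ w₃ ≤ x + y + z := by
  have hx : x ≤ x + y + z := le_add_right le_self_add
  have hy : y ≤ x + y + z := le_add_right le_add_self
  have hz : z ≤ x + y + z := le_add_self
  calc x ^ w₁ * y ^ w₂ * z ^ w₃
      ≤ (x + y + z) ^ w₁ * (x + y + z) ^ w₂ * (x + y + z) ^ w₃ := by gcongr
    _ = x + y + z := by
      rw [← ENNReal.rpow_add_of_nonneg _ _ h₁ h₂,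
        ← ENNReal.rpow_add_of_nonneg _ _ (by positivity) h₃, hw, ENNReal.rpow_one]

theorem ennreal_mul_mul_le_rpow_add_rpow_mul_rpow {q : ℝ} (hq₁ : 1 < q) (hq₂ : q ≤ 2)
    (k s t : ℝ≥0∞) :
    k * (s * t) ≤ s ^ q * t ^ q + s ^ q * k ^ (q / (2 * (q - 1))) +
      t ^ q * k ^ (q / (2 * (q - 1))) := by
  have hq₀ : 0 < q - 1 := by linarith
  have hw₁ : 0 ≤ 2 / q - 1 := by rw [sub_nonneg, le_div_iff₀] <;> linarith
  have hw₂ : 0 ≤ 1 - 1 / q := by rw [sub_nonneg, div_le_one] <;> linarith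
  have hpow (x : ℝ≥0∞) : (x ^ q) ^ (2 / q - 1) * (x ^ q) ^ (1 - 1 / q) = x := by
    rw [← ENNReal.rpow_add_of_nonneg _ _ hw₁ hw₂, ← ENNReal.rpow_mul,
      show q * (2 / q - 1 + (1 - 1 / q)) = 1 by field_simp; ring, ENNReal.rpow_one]
  have hker : (k ^ (q / (2 * (q - 1)))) ^ (1 - 1 / q) * (k ^ (q / (2 * (q - 1)))) ^ (1 - 1 / q) =
      k := by
    rw [← ENNReal.rpow_add_of_nonneg _ _ hw₂ hw₂, ← ENNReal.rpow_mul,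
      show q / (2 * (q - 1)) * (1 - 1 / q + (1 - 1 / q)) = 1 by field_simp; ring, ENNReal.rpow_one]
  refine le_of_eq_of_le ?_ (ennreal_rpow_mul_rpow_mul_rpow_le_add hw₁ hw₂ hw₂ (by ring) _ _ _)
  rw [ENNReal.mul_rpow_of_nonneg _ _ hw₁, ENNReal.mul_rpow_of_nonneg _ _ hw₂,
    ENNReal.mul_rpow_of_nonneg _ _ hw₂]
  conv_lhs => rw [← hker, ← hpow s, ← hpow t]
  ring

theorem lintegral_lintegral_sub_mul_le {G : Type*} [AddGroup G] [MeasurableSpace G]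
    [MeasurableAdd₂ G] [MeasurableNeg G] (μ : Measure G) [SFinite μ] [μ.IsAddLeftInvariant]
    [μ.IsAddRightInvariant] [μ.IsNegInvariant] {k f g : G → ℝ≥0∞} (hk : Measurable k)
    (hf : Measurable f) (hg : Measurable g) {q : ℝ} (hq₁ : 1 < q) (hq₂ : q ≤ 2) :
    ∫⁻ x, ∫⁻ y, k (x - y) * (f x * g y) ∂μ ∂μ ≤
      (∫⁻ x, f x ^ q ∂μ) * (∫⁻ x, g x ^ q ∂μ) +
        (∫⁻ x, f x ^ q ∂μ) * (∫⁻ z, k z ^ (q / (2 * (q - 1))) ∂μ) +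
        (∫⁻ x, g x ^ q ∂μ) * (∫⁻ z, k z ^ (q / (2 * (q - 1))) ∂μ) := by
  set r := q / (2 * (q - 1))
  have hfst : ∫⁻ x, ∫⁻ y, f x ^ q * k (x - y) ^ r ∂μ ∂μ =
      (∫⁻ x, f x ^ q ∂μ) * ∫⁻ z, k z ^ r ∂μ := by
    rw [← lintegral_mul_const _ (by fun_prop)]
    refine lintegral_congr fun x ↦ ?_
    rw [lintegral_const_mul _ (by fun_prop), lintegral_sub_left_eq_self (fun z ↦ k z ^ r) x]
  have hsnd : ∫⁻ x, ∫⁻ y, g y ^ q * k (x - y) ^ r ∂μ ∂μ =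
      (∫⁻ x, g x ^ q ∂μ) * ∫⁻ z, k z ^ r ∂μ := by
    rw [lintegral_lintegral_swap (by fun_prop), ← lintegral_mul_const _ (by fun_prop)]
    refine lintegral_congr fun y ↦ ?_
    rw [lintegral_const_mul _ (by fun_prop), lintegral_sub_right_eq_self (fun z ↦ k z ^ r) y]
  calc ∫⁻ x, ∫⁻ y, k (x - y) * (f x * g y) ∂μ ∂μ
      ≤ ∫⁻ x, ∫⁻ y, (f x ^ q * g y ^ q + f x ^ q * k (x - y) ^ r + g y ^ q * k (x - y) ^ r)
          ∂μ ∂μ := by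
        gcongr with x y
        exact ennreal_mul_mul_le_rpow_add_rpow_mul_rpow hq₁ hq₂ _ _ _
    _ = (∫⁻ x, ∫⁻ y, f x ^ q * g y ^ q ∂μ ∂μ) + (∫⁻ x, ∫⁻ y, f x ^ q * k (x - y) ^ r ∂μ ∂μ) +
          ∫⁻ x, ∫⁻ y, g y ^ q * k (x - y) ^ r ∂μ ∂μ := by
        rw [← lintegral_add_left (by fun_prop), ← lintegral_add_left (by fun_prop)]
        refine lintegral_congr fun x ↦ ?_
        rw [lintegral_add_left (by fun_prop), lintegral_add_left (by fun_prop)]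
    _ = _ := by
        rw [hfst, hsnd, lintegral_lintegral_mul (by fun_prop) (by fun_prop)]

theorem enorm_rpow_eq_ofReal {G : Type*} [NormedAddCommGroup G] {z : G} (hz : z ≠ 0) (t : ℝ) :
    ‖z‖ₑ ^ t = ENNReal.ofReal (‖z‖ ^ t) := by
  rw [← ofReal_norm, ENNReal.ofReal_rpow_of_pos (norm_pos_iff.2 hz)]

theorem enorm_norm_rpow_le {G : Type*} [NormedAddCommGroup G] (z : G) (t : ℝ) :
    ‖‖z‖ ^ t‖ₑ ≤ ‖z‖ₑ ^ t := by
  rcases eq_or_ne z 0 with rfl | hz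
  · rcases eq_or_ne t 0 with rfl | ht
    · simp
    · simp [Real.zero_rpow ht]
  · rw [enorm_rpow_eq_ofReal hz, Real.enorm_of_nonneg (by positivity)]

theorem lintegral_rpow_le_add {X : Type*} [MeasurableSpace X] (ν : Measure X) {a q b : ℝ}
    (haq : a ≤ q) (hqb : q ≤ b) {f : X → ℝ≥0∞} (hf : Measurable f) :
    ∫⁻ x, f x ^ q ∂ν ≤ ∫⁻ x, f x ^ a ∂ν + ∫⁻ x, f x ^ b ∂ν := by
  rw [← lintegral_add_left (by fun_prop)]
  gcongr with x
  rcases le_total (f x) 1 with hx | hx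
  · exact (ENNReal.rpow_le_rpow_of_exponent_ge hx haq).trans le_self_add
  · exact (ENNReal.rpow_le_rpow_of_exponent_le hx hqb).trans le_add_self

variable {E : Type*} [NormedAddCommGroup E] [MeasurableSpace E] (μ : Measure E)

/-- The Riesz energy `∫∫ f x * f y / ‖x - y‖ ^ lam` of a nonnegative function; the exponent of the
Riesz potential of order `α` is `lam = n - α`. -/
noncomputable def rieszEnergy (lam : ℝ) (f : E → ℝ≥0∞) : ℝ≥0∞ :=
  ∫⁻ x, ∫⁻ y, ‖x - y‖ₑ ^ (-lam) * (f x * f y) ∂μ ∂μ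

theorem rieszEnergy_eq_zero_of_lintegral_rpow_eq_zero (lam : ℝ) {a : ℝ} (ha : 0 < a)
    {f : E → ℝ≥0∞} (hf : Measurable f) (hfa : ∫⁻ x, f x ^ a ∂μ = 0) : rieszEnergy μ lam f = 0 := by
  have hf₀ : f =ᵐ[μ] 0 := by
    filter_upwards [(lintegral_eq_zero_iff (by fun_prop)).1 hfa] with x hx
    exact (ENNReal.rpow_eq_zero_iff_of_pos ha).1 hx
  rw [rieszEnergy, lintegral_congr_ae (g := fun _ ↦ 0), lintegral_zero]
  filter_upwards [hf₀] with x hx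
  simp [hx]

theorem enorm_integral_integral_mul_le_rieszEnergy (A lam : ℝ) (g : E → ℝ) :
    ‖∫ x, (∫ y, A * ‖x - y‖ ^ (-lam) * g y ∂μ) * g x ∂μ‖ₑ ≤
      ‖A‖ₑ * rieszEnergy μ lam fun x ↦ ‖g x‖ₑ := by
  calc ‖∫ x, (∫ y, A * ‖x - y‖ ^ (-lam) * g y ∂μ) * g x ∂μ‖ₑ
      ≤ ∫⁻ x, ‖∫ y, A * ‖x - y‖ ^ (-lam) * g y ∂μ‖ₑ * ‖g x‖ₑ ∂μ := by
        simpa only [enorm_mul] using enorm_integral_le_lintegral_enorm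
          fun x ↦ (∫ y, A * ‖x - y‖ ^ (-lam) * g y ∂μ) * g x
    _ ≤ ∫⁻ x, (∫⁻ y, ‖A‖ₑ * ‖x - y‖ₑ ^ (-lam) * ‖g y‖ₑ ∂μ) * ‖g x‖ₑ ∂μ := by
        gcongr with x
        refine (enorm_integral_le_lintegral_enorm _).trans ?_
        simp only [enorm_mul]
        gcongr with y
        exact enorm_norm_rpow_le _ _
    _ = ‖A‖ₑ * rieszEnergy μ lam fun x ↦ ‖g x‖ₑ := by
        rw [rieszEnergy, ← lintegral_const_mul' _ _ enorm_ne_top]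
        refine lintegral_congr fun x ↦ ?_
        rw [← lintegral_const_mul' _ _ enorm_ne_top, ← lintegral_mul_const' _ _ enorm_ne_top]
        refine lintegral_congr fun y ↦ ?_
        ring

variable [NormedSpace ℝ E] [FiniteDimensional ℝ E] [BorelSpace E] [μ.IsAddHaarMeasure]

theorem setLIntegral_ball_enorm_rpow_neg_lt_top [Nontrivial E] {t : ℝ} (ht : t < finrank ℝ E) :
    ∫⁻ z in ball 0 1, ‖z‖ₑ ^ (-t) ∂μ < ∞ := by
  have hint : IntegrableOn (fun z : E ↦ ‖z‖ ^ (-t)) (ball 0 1) μ :=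
    integrableOn_ball_of_norm_le_rpow (C := 1) finrank_pos ht
      (.of_forall fun z ↦ by rw [one_mul, Real.norm_of_nonneg (by positivity)])
      (by fun_prop : Measurable _).aestronglyMeasurable
  refine (lintegral_congr_ae ?_).trans_lt hint.hasFiniteIntegral
  filter_upwards [Measure.ae_ne (μ.restrict (ball 0 1)) 0] with z hz
  rw [enorm_rpow_eq_ofReal hz, Real.enorm_of_nonneg (by positivity)]

theorem setLIntegral_compl_ball_enorm_rpow_neg_lt_top {t : ℝ} (ht : finrank ℝ E < t) :
    ∫⁻ z in (ball 0 1)ᶜ, ‖z‖ₑ ^ (-t) ∂μ < ∞ := by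
  have ht₀ : 0 < t := (Nat.cast_nonneg _).trans_lt ht
  have hle {z : E} (hz : z ∈ (ball 0 1)ᶜ) :
      ‖z‖ₑ ^ (-t) ≤ ENNReal.ofReal (2 ^ t) * ENNReal.ofReal ((1 + ‖z‖) ^ (-t)) := by
    have hz₁ : 1 ≤ ‖z‖ := by simpa using hz
    rw [enorm_rpow_eq_ofReal (norm_pos_iff.1 (by linarith)), ← ENNReal.ofReal_mul (by positivity)]
    refine ENNReal.ofReal_le_ofReal ?_
    calc ‖z‖ ^ (-t) = 2 ^ t * (2 * ‖z‖) ^ (-t) := by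
          rw [mul_rpow (by norm_num) (by positivity), ← mul_assoc, ← rpow_add (by norm_num),
            add_neg_cancel, rpow_zero, one_mul]
      _ ≤ 2 ^ t * (1 + ‖z‖) ^ (-t) := by
          gcongr 2 ^ t * ?_
          exact rpow_le_rpow_of_nonpos (by positivity) (by linarith) (neg_nonpos.2 ht₀.le)
  calc ∫⁻ z in (ball 0 1)ᶜ, ‖z‖ₑ ^ (-t) ∂μ
      ≤ ∫⁻ z in (ball 0 1)ᶜ, ENNReal.ofReal (2 ^ t) * ENNReal.ofReal ((1 + ‖z‖) ^ (-t)) ∂μ :=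
        setLIntegral_mono' measurableSet_ball.compl fun _ ↦ hle
    _ ≤ ∫⁻ z, ENNReal.ofReal (2 ^ t) * ENNReal.ofReal ((1 + ‖z‖) ^ (-t)) ∂μ :=
        setLIntegral_le_lintegral _ _
    _ < ∞ := by
        rw [lintegral_const_mul' _ _ (by simp)]
        exact ENNReal.mul_lt_top (by simp) (finite_integral_one_add_norm ht)

theorem lintegral_lintegral_indicator_enorm_rpow_le {lam q : ℝ} (hq₁ : 1 < q) (hq₂ : q ≤ 2)
    {S : Set E} (hS : MeasurableSet S) {f : E → ℝ≥0∞} (hf : Measurable f)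
    (hfq : ∫⁻ x, f x ^ q ∂μ ≤ 2) :
    ∫⁻ x, ∫⁻ y, S.indicator (fun z ↦ ‖z‖ₑ ^ (-lam)) (x - y) * (f x * f y) ∂μ ∂μ ≤
      4 + 4 * ∫⁻ z in S, ‖z‖ₑ ^ (-(lam * (q / (2 * (q - 1))))) ∂μ := by
  have hr : 0 < q / (2 * (q - 1)) := div_pos (by linarith) (by linarith)
  have hker : ∫⁻ z, S.indicator (fun z ↦ ‖z‖ₑ ^ (-lam)) z ^ (q / (2 * (q - 1))) ∂μ =
      ∫⁻ z in S, ‖z‖ₑ ^ (-(lam * (q / (2 * (q - 1))))) ∂μ := by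
    rw [← lintegral_indicator hS]
    refine lintegral_congr fun z ↦ ?_
    by_cases hz : z ∈ S
    · rw [indicator_of_mem hz, indicator_of_mem hz, ← ENNReal.rpow_mul, neg_mul]
    · rw [indicator_of_notMem hz, indicator_of_notMem hz, ENNReal.zero_rpow_of_pos hr]
  refine (lintegral_lintegral_sub_mul_le μ (.indicator (by fun_prop) hS) hf hf hq₁ hq₂).trans ?_
  rw [hker]
  set I := ∫⁻ z in S, ‖z‖ₑ ^ (-(lam * (q / (2 * (q - 1))))) ∂μ
  calc _ ≤ 2 * 2 + 2 * I + 2 * I := by gcongr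
    _ = 4 + 4 * I := by ring

theorem rieszEnergy_eq_add_compl (lam : ℝ) {S : Set E} (hS : MeasurableSet S) {f : E → ℝ≥0∞}
    (hf : Measurable f) :
    rieszEnergy μ lam f =
      ∫⁻ x, ∫⁻ y, S.indicator (fun z ↦ ‖z‖ₑ ^ (-lam)) (x - y) * (f x * f y) ∂μ ∂μ +
        ∫⁻ x, ∫⁻ y, Sᶜ.indicator (fun z ↦ ‖z‖ₑ ^ (-lam)) (x - y) * (f x * f y) ∂μ ∂μ := by
  have : Measurable (S.indicator fun z : E ↦ ‖z‖ₑ ^ (-lam)) := .indicator (by fun_prop) hS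
  rw [← lintegral_add_left (by fun_prop)]
  refine lintegral_congr fun x ↦ ?_
  rw [← lintegral_add_left (by fun_prop)]
  refine lintegral_congr fun y ↦ ?_
  rw [← add_mul, indicator_self_add_compl_apply]

-- The kernel exponent `lam * q / (2 * (q - 1))` is `n` at the critical `q = s`, hence the kernel is
-- integrable near the origin for `q > s` and at infinity for `q < s`.
theorem mul_div_two_mul_sub_one_eq {n lam s q : ℝ} (hn : n ≠ 0) (hs₀ : s ≠ 0) (hq : q ≠ 1)
    (hs : 2 / s + lam / n = 2) :
    lam * (q / (2 * (q - 1))) = n + n * (s - q) / (s * (q - 1)) := by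
  have hq₁ : q - 1 ≠ 0 := sub_ne_zero.2 hq
  obtain rfl : lam = n * (2 - 2 / s) := by
    linear_combination n * hs - mul_div_cancel₀ lam hn
  field_simp
  ring

theorem exists_rieszEnergy_le_of_lintegral_rpow_le_one {lam s a b : ℝ} (hlam₀ : 0 < lam)
    (hlam : lam < finrank ℝ E) (hs₀ : 0 < s) (hs : 2 / s + lam / finrank ℝ E = 2) (has : a < s)
    (hsb : s < b) :
    ∃ K : ℝ≥0, ∀ f : E → ℝ≥0∞, Measurable f → ∫⁻ x, f x ^ a ∂μ ≤ 1 → ∫⁻ x, f x ^ b ∂μ ≤ 1 →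
      rieszEnergy μ lam f ≤ K := by
  have hn : 0 < (finrank ℝ E : ℝ) := hlam₀.trans hlam
  have : Nontrivial E := nontrivial_of_finrank_pos (R := ℝ) (by exact_mod_cast hn)
  have hs₁ : 1 < s := by
    have := (div_lt_iff₀ hs₀).1 (by linarith [div_pos hlam₀ hn] : 2 / s < 2)
    linarith
  have hs₂ : s < 2 := (one_lt_div hs₀).1 (by linarith [(div_lt_one hn).2 hlam])
  obtain ⟨q₁, hsq₁, hq₁⟩ := exists_between (lt_min hsb hs₂)
  obtain ⟨q₂, hq₂, hsq₂⟩ := exists_between (max_lt has hs₁)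
  rw [lt_min_iff] at hq₁
  rw [max_lt_iff] at hq₂
  have hnear := setLIntegral_ball_enorm_rpow_neg_lt_top μ (t := lam * (q₁ / (2 * (q₁ - 1)))) <| by
    rw [mul_div_two_mul_sub_one_eq hn.ne' hs₀.ne' (by linarith) hs]
    exact add_lt_of_neg_right _ (div_neg_of_neg_of_pos (mul_neg_of_pos_of_neg hn (by linarith))
      (mul_pos hs₀ (by linarith)))
  have hfar := setLIntegral_compl_ball_enorm_rpow_neg_lt_top μ
    (t := lam * (q₂ / (2 * (q₂ - 1)))) <| by
    rw [mul_div_two_mul_sub_one_eq hn.ne' hs₀.ne' (by linarith) hs]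
    exact lt_add_of_pos_right _ (div_pos (mul_pos hn (by linarith)) (mul_pos hs₀ (by linarith)))
  set I := ∫⁻ z in ball 0 1, ‖z‖ₑ ^ (-(lam * (q₁ / (2 * (q₁ - 1))))) ∂μ
  set J := ∫⁻ z in (ball 0 1)ᶜ, ‖z‖ₑ ^ (-(lam * (q₂ / (2 * (q₂ - 1))))) ∂μ
  refine ⟨(4 + 4 * I + (4 + 4 * J)).toNNReal, fun f hf hfa hfb ↦ ?_⟩
  have hfq {q : ℝ} (haq : a ≤ q) (hqb : q ≤ b) : ∫⁻ x, f x ^ q ∂μ ≤ 2 :=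
    (lintegral_rpow_le_add μ haq hqb hf).trans ((add_le_add hfa hfb).trans_eq one_add_one_eq_two)
  rw [ENNReal.coe_toNNReal (by finiteness),
    rieszEnergy_eq_add_compl μ lam (measurableSet_ball (x := 0) (ε := 1)) hf]
  gcongr
  · exact lintegral_lintegral_indicator_enorm_rpow_le μ (by linarith) hq₁.2.le
      measurableSet_ball hf (hfq (by linarith) hq₁.1.le)
  · exact lintegral_lintegral_indicator_enorm_rpow_le μ hq₂.2 (by linarith)
      measurableSet_ball.compl hf (hfq hq₂.1.le (by linarith))

theorem lintegral_comp_smul {R : ℝ} (hR : 0 < R) (f : E → ℝ≥0∞) :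
    ∫⁻ x, f (R • x) ∂μ = ENNReal.ofReal R ^ (-finrank ℝ E : ℝ) * ∫⁻ x, f x ∂μ := by
  have hmap : ∫⁻ x, f x ∂μ.map (R • ·) = ∫⁻ x, f (R • x) ∂μ :=
    lintegral_map_equiv f (MeasurableEquiv.smul₀ R hR.ne')
  rw [← hmap, Measure.map_addHaar_smul μ hR.ne', lintegral_smul_measure, smul_eq_mul,
    abs_of_pos (by positivity), ENNReal.ofReal_inv_of_pos (by positivity),
    ENNReal.ofReal_pow hR.le, ENNReal.rpow_neg, ENNReal.rpow_natCast]

theorem lintegral_const_mul_comp_smul_rpow {q R : ℝ} (hq : 0 ≤ q) (hR : 0 < R) (c : ℝ≥0)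
    (f : E → ℝ≥0∞) :
    ∫⁻ x, (c * f (R • x)) ^ q ∂μ =
      ENNReal.ofReal R ^ (-finrank ℝ E : ℝ) * (c ^ q * ∫⁻ x, f x ^ q ∂μ) := by
  rw [← lintegral_const_mul' _ _ (by finiteness),
    ← lintegral_comp_smul μ hR fun x ↦ (c : ℝ≥0∞) ^ q * f x ^ q]
  simp only [ENNReal.mul_rpow_of_nonneg _ _ hq]

theorem rieszEnergy_const_mul_comp_smul (lam : ℝ) {R : ℝ} (hR : 0 < R) (c : ℝ≥0)
    (f : E → ℝ≥0∞) :
    rieszEnergy μ lam (fun x ↦ c * f (R • x)) =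
      ENNReal.ofReal R ^ (lam - 2 * finrank ℝ E) * (c ^ 2 * rieszEnergy μ lam f) := by
  have hR₀ : ENNReal.ofReal R ≠ 0 := by simpa
  have hR₁ : ENNReal.ofReal R ≠ ∞ := ENNReal.ofReal_ne_top
  have hker (x y : E) : ‖x - y‖ₑ ^ (-lam) * (c * f (R • x) * (c * f (R • y))) =
      ENNReal.ofReal R ^ lam * c ^ 2 *
        (‖R • x - R • y‖ₑ ^ (-lam) * (f (R • x) * f (R • y))) := by
    have hnorm : ‖R • x - R • y‖ₑ = ENNReal.ofReal R * ‖x - y‖ₑ := by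
      rw [← smul_sub, enorm_smul, Real.enorm_of_nonneg hR.le]
    rw [hnorm, ENNReal.mul_rpow_of_ne_top hR₁ enorm_ne_top]
    calc _ = (ENNReal.ofReal R ^ lam * ENNReal.ofReal R ^ (-lam)) * _ := by
          rw [← ENNReal.rpow_add _ _ hR₀ hR₁, add_neg_cancel, ENNReal.rpow_zero, one_mul]
      _ = _ := by ring
  have hA : ENNReal.ofReal R ^ lam * c ^ 2 ≠ ∞ := by finiteness
  have hB : ENNReal.ofReal R ^ (-finrank ℝ E : ℝ) ≠ ∞ := by finiteness
  calc rieszEnergy μ lam (fun x ↦ c * f (R • x))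
      = ∫⁻ x, ENNReal.ofReal R ^ lam * c ^ 2 *
          ∫⁻ y, ‖R • x - R • y‖ₑ ^ (-lam) * (f (R • x) * f (R • y)) ∂μ ∂μ := by
        simp only [rieszEnergy, hker, lintegral_const_mul' _ _ hA]
    _ = ENNReal.ofReal R ^ lam * c ^ 2 * ∫⁻ x, ENNReal.ofReal R ^ (-finrank ℝ E : ℝ) *
          ∫⁻ y, ‖R • x - y‖ₑ ^ (-lam) * (f (R • x) * f y) ∂μ ∂μ := by
        rw [lintegral_const_mul' _ _ hA]
        congr! 3 with x
        exact lintegral_comp_smul μ hR fun y ↦ ‖R • x - y‖ₑ ^ (-lam) * (f (R • x) * f y)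
    _ = ENNReal.ofReal R ^ lam * c ^ 2 * (ENNReal.ofReal R ^ (-finrank ℝ E : ℝ) *
          (ENNReal.ofReal R ^ (-finrank ℝ E : ℝ) * rieszEnergy μ lam f)) := by
        rw [lintegral_const_mul' _ _ hB, lintegral_comp_smul μ hR fun x ↦
          ∫⁻ y, ‖x - y‖ₑ ^ (-lam) * (f x * f y) ∂μ, rieszEnergy]
    _ = ENNReal.ofReal R ^ (lam - 2 * finrank ℝ E) * (c ^ 2 * rieszEnergy μ lam f) := by
        rw [show lam - 2 * finrank ℝ E = lam + (-finrank ℝ E + -finrank ℝ E) by ring,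
          ENNReal.rpow_add _ _ hR₀ hR₁, ENNReal.rpow_add _ _ hR₀ hR₁]
        ring

-- The amplitude `c` balances the two moments, `c ^ a * X = c ^ b * Y` (the case `q = b`), so that
-- one dilation normalizes both.
theorem nnreal_exists_rpow_mul_eq {a b : ℝ} (hab : a < b) {X Y : ℝ≥0} (hX : X ≠ 0) (hY : Y ≠ 0) :
    ∃ c : ℝ≥0, c ≠ 0 ∧
      ∀ q, c ^ a * X = c ^ q * (X ^ ((b - q) / (b - a)) * Y ^ ((q - a) / (b - a))) := by
  have hba : b - a ≠ 0 := (sub_pos.2 hab).ne'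
  refine ⟨(X * Y⁻¹) ^ (b - a)⁻¹, by positivity, fun q ↦ ?_⟩
  simp only [NNReal.mul_rpow, NNReal.inv_rpow, ← NNReal.rpow_neg, ← NNReal.rpow_mul]
  calc _ = X ^ ((b - a)⁻¹ * a + 1) * Y ^ (-(b - a)⁻¹ * a) := by
        rw [NNReal.rpow_add hX, NNReal.rpow_one]
        ring
    _ = X ^ ((b - a)⁻¹ * q + (b - q) / (b - a)) * Y ^ (-(b - a)⁻¹ * q + (q - a) / (b - a)) := by
        congr 2 <;> field_simp <;> ring
    _ = _ := by
        rw [NNReal.rpow_add hX, NNReal.rpow_add hY]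
        ring

theorem mul_rieszEnergy_le_of_scaling {lam s a b : ℝ} {K : ℝ≥0} (ha : 0 ≤ a) (hb : 0 ≤ b)
    (hn : finrank ℝ E ≠ 0) (hs : 2 / s + lam / finrank ℝ E = 2)
    (hK : ∀ f : E → ℝ≥0∞, Measurable f → ∫⁻ x, f x ^ a ∂μ ≤ 1 → ∫⁻ x, f x ^ b ∂μ ≤ 1 →
      rieszEnergy μ lam f ≤ K)
    {f : E → ℝ≥0∞} (hf : Measurable f) {c V : ℝ≥0} (hV : V ≠ 0)
    (hfa : c ^ a * ∫⁻ x, f x ^ a ∂μ ≤ V) (hfb : c ^ b * ∫⁻ x, f x ^ b ∂μ ≤ V) :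
    c ^ 2 * rieszEnergy μ lam f ≤ K * V ^ (2 / s) := by
  obtain ⟨R, hR, hRV⟩ : ∃ R : ℝ, 0 < R ∧ ENNReal.ofReal R ^ (finrank ℝ E : ℝ) = V := by
    refine ⟨(V ^ (finrank ℝ E : ℝ)⁻¹ : ℝ≥0), by positivity, ?_⟩
    rw [ENNReal.ofReal_coe_nnreal, ← ENNReal.coe_rpow_of_nonneg _ (by positivity),
      NNReal.rpow_inv_rpow (mod_cast hn)]
  have hR₀ : ENNReal.ofReal R ≠ 0 := by simpa
  have hR₁ : ENNReal.ofReal R ≠ ∞ := ENNReal.ofReal_ne_top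
  have hnormalized {q : ℝ} (hq : 0 ≤ q) (hfq : c ^ q * ∫⁻ x, f x ^ q ∂μ ≤ V) :
      ∫⁻ x, (c * f (R • x)) ^ q ∂μ ≤ 1 := by
    rw [lintegral_const_mul_comp_smul_rpow μ hq hR, ENNReal.rpow_neg, hRV,
      ← ENNReal.div_eq_inv_mul]
    exact ENNReal.div_le_of_le_mul (by rwa [one_mul])
  have hexp : 2 * (finrank ℝ E : ℝ) - lam = finrank ℝ E * (2 / s) := by
    linear_combination mul_div_cancel₀ lam (mod_cast hn : (finrank ℝ E : ℝ) ≠ 0) - finrank ℝ E * hs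
  calc c ^ 2 * rieszEnergy μ lam f
      = ENNReal.ofReal R ^ (2 * (finrank ℝ E : ℝ) - lam) *
          rieszEnergy μ lam (fun x ↦ c * f (R • x)) := by
        rw [rieszEnergy_const_mul_comp_smul μ lam hR, ← mul_assoc, ← ENNReal.rpow_add _ _ hR₀ hR₁,
          sub_add_sub_cancel, sub_self, ENNReal.rpow_zero, one_mul]
    _ ≤ ENNReal.ofReal R ^ (2 * (finrank ℝ E : ℝ) - lam) * K := by
        gcongr
        exact hK _ (by fun_prop) (hnormalized ha hfa) (hnormalized hb hfb)
    _ = K * V ^ (2 / s) := by rw [hexp, ENNReal.rpow_mul, hRV, mul_comm]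

theorem exists_rieszEnergy_le_lintegral_rpow {lam s a b : ℝ} (hlam₀ : 0 < lam)
    (hlam : lam < finrank ℝ E) (hs : 2 / s + lam / finrank ℝ E = 2) (ha : 0 < a) (has : a < s)
    (hsb : s < b) :
    ∃ K : ℝ≥0, ∀ f : E → ℝ≥0∞, Measurable f → ∫⁻ x, f x ^ a ∂μ ≠ ∞ → ∫⁻ x, f x ^ b ∂μ ≠ ∞ →
      rieszEnergy μ lam f ≤ K * ((∫⁻ x, f x ^ a ∂μ) ^ ((b - s) / (b - a)) *
        (∫⁻ x, f x ^ b ∂μ) ^ ((s - a) / (b - a))) ^ (2 / s) := by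
  have hs₀ : 0 < s := ha.trans has
  have hb : 0 < b := hs₀.trans hsb
  have hn : finrank ℝ E ≠ 0 := Nat.cast_ne_zero.1 (hlam₀.trans hlam).ne'
  obtain ⟨K, hK⟩ := exists_rieszEnergy_le_of_lintegral_rpow_le_one μ hlam₀ hlam hs₀ hs has hsb
  refine ⟨K, fun f hf hX hY ↦ ?_⟩
  rcases eq_or_ne (∫⁻ x, f x ^ a ∂μ) 0 with hX₀ | hX₀
  · simp [rieszEnergy_eq_zero_of_lintegral_rpow_eq_zero μ lam ha hf hX₀]
  rcases eq_or_ne (∫⁻ x, f x ^ b ∂μ) 0 with hY₀ | hY₀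
  · simp [rieszEnergy_eq_zero_of_lintegral_rpow_eq_zero μ lam hb hf hY₀]
  lift ∫⁻ x, f x ^ a ∂μ to ℝ≥0 using hX with X hX_eq
  lift ∫⁻ x, f x ^ b ∂μ to ℝ≥0 using hY with Y hY_eq
  obtain ⟨c, hc, hcq⟩ := nnreal_exists_rpow_mul_eq (has.trans hsb) (mod_cast hX₀ : X ≠ 0)
    (mod_cast hY₀ : Y ≠ 0)
  have hV₀ : c ^ a * X ≠ 0 := mul_ne_zero (by positivity) (mod_cast hX₀)
  have hVb : c ^ b * Y = c ^ a * X := by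
    rw [hcq b, sub_self, zero_div, NNReal.rpow_zero, one_mul, div_self (by linarith),
      NNReal.rpow_one]
  have hVs : (c ^ a * X) ^ (2 / s) =
      c ^ 2 * (X ^ ((b - s) / (b - a)) * Y ^ ((s - a) / (b - a))) ^ (2 / s) := by
    rw [hcq s, NNReal.mul_rpow, ← NNReal.rpow_mul, mul_div_cancel₀ _ hs₀.ne', NNReal.rpow_two]
  have hscaled := mul_rieszEnergy_le_of_scaling μ ha.le hb.le hn hs hK hf (c := c) hV₀
    (by rw [← hX_eq, ENNReal.coe_mul, ENNReal.coe_rpow_of_nonneg _ ha.le])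
    (by rw [← hY_eq, ← hVb, ENNReal.coe_mul, ENNReal.coe_rpow_of_nonneg _ hb.le])
  rw [← ENNReal.coe_rpow_of_nonneg _ (by positivity), hVs, ENNReal.coe_mul, ENNReal.coe_pow,
    mul_left_comm] at hscaled
  have hca : (c : ℝ≥0∞) ^ 2 ≠ 0 := by simpa using hc
  refine ((ENNReal.mul_le_mul_iff_right hca (by finiteness)).1 hscaled).trans_eq ?_
  rw [ENNReal.coe_rpow_of_nonneg _ (by positivity), ENNReal.coe_mul,
    ENNReal.coe_rpow_of_nonneg _ (div_nonneg (by linarith) (by linarith)),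
    ENNReal.coe_rpow_of_nonneg _ (div_nonneg (by linarith) (by linarith))]

end RieszEnergy

section Hardy

theorem integrable_and_integral_le_of_tendsto {X : Type*} [MeasurableSpace X] {μ : Measure X}
    {f : ℕ → X → ℝ} {g : X → ℝ} {B : ℝ} (hf : ∀ k, Integrable (f k) μ) (hf₀ : ∀ k, 0 ≤ f k)
    (hB : ∀ k, ∫ x, f k x ∂μ ≤ B) (hg : AEStronglyMeasurable g μ)
    (hlim : ∀ᵐ x ∂μ, Tendsto (fun k ↦ f k x) atTop (𝓝 (g x))) :
    Integrable g μ ∧ ∫ x, g x ∂μ ≤ B := by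
  have hg₀ : 0 ≤ᵐ[μ] g := hlim.mono fun x hx ↦ ge_of_tendsto' hx fun k ↦ hf₀ k x
  have hB₀ : 0 ≤ B := (integral_nonneg (hf₀ 0)).trans (hB 0)
  have hfatou : ∫⁻ x, ENNReal.ofReal (g x) ∂μ ≤ ENNReal.ofReal B := by
    calc ∫⁻ x, ENNReal.ofReal (g x) ∂μ
        = ∫⁻ x, liminf (fun k ↦ ENNReal.ofReal (f k x)) atTop ∂μ :=
          lintegral_congr_ae <| hlim.mono fun x hx ↦ (ENNReal.tendsto_ofReal hx).liminf_eq.symm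
      _ ≤ liminf (fun k ↦ ∫⁻ x, ENNReal.ofReal (f k x) ∂μ) atTop :=
          lintegral_liminf_le' fun k ↦ (hf k).aemeasurable.ennreal_ofReal
      _ ≤ liminf (fun _ : ℕ ↦ ENNReal.ofReal B) atTop := by
          refine liminf_le_liminf (.of_forall fun k ↦ ?_)
          rw [← ofReal_integral_eq_lintegral_ofReal (hf k) (.of_forall (hf₀ k))]
          exact ENNReal.ofReal_le_ofReal (hB k)
      _ = ENNReal.ofReal B := liminf_const _
  have hgi : Integrable g μ :=
    ⟨hg, (hasFiniteIntegral_iff_ofReal hg₀).2 (hfatou.trans_lt ENNReal.ofReal_lt_top)⟩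
  rw [← ofReal_integral_eq_lintegral_ofReal hgi hg₀, ENNReal.ofReal_le_ofReal_iff hB₀] at hfatou
  exact ⟨hgi, hfatou⟩

theorem integral_fderiv_apply_self {E : Type*} [NormedAddCommGroup E] [NormedSpace ℝ E]
    [FiniteDimensional ℝ E] [MeasurableSpace E] [BorelSpace E] (μ : Measure E)
    [μ.IsAddHaarMeasure] {φ : E → ℝ} (hφ : ContDiff ℝ 1 φ) (hφs : HasCompactSupport φ) :
    ∫ x, fderiv ℝ φ x x ∂μ = -(finrank ℝ E * ∫ x, φ x ∂μ) := by
  let B := finBasis ℝ E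
  let coord (i : Fin (finrank ℝ E)) : E →L[ℝ] ℝ := (B.coord i).toContinuousLinearMap
  have hdφ (v : E) : Continuous fun x ↦ fderiv ℝ φ x v := by
    have := hφ.continuous_fderiv one_ne_zero
    fun_prop
  have hint (i) : Integrable (fun x ↦ coord i x * fderiv ℝ φ x (B i)) μ :=
    ((coord i).continuous.mul (hdφ _)).integrable_of_hasCompactSupport
      (hφs.fderiv_apply (𝕜 := ℝ) (B i)).mul_left
  have hparts (i) : ∫ x, coord i x * fderiv ℝ φ x (B i) ∂μ = -∫ x, φ x ∂μ := by
    have hone (x) : fderiv ℝ (coord i) x (B i) = 1 := by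
      rw [ContinuousLinearMap.fderiv]
      simp [coord]
    rw [integral_mul_fderiv_eq_neg_fderiv_mul_of_integrable _ (hint i)
      (((coord i).continuous.mul hφ.continuous).integrable_of_hasCompactSupport hφs.mul_left)
      (fun x _ ↦ (coord i).differentiableAt)
      (fun x _ ↦ hφ.differentiable one_ne_zero x)]
    · simp only [hone, one_mul]
    · simp only [hone, one_mul]
      exact hφ.continuous.integrable_of_hasCompactSupport hφs
  calc ∫ x, fderiv ℝ φ x x ∂μ = ∫ x, ∑ i, coord i x * fderiv ℝ φ x (B i) ∂μ := by
        refine integral_congr_ae (.of_forall fun x ↦ ?_)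
        calc fderiv ℝ φ x x = fderiv ℝ φ x (∑ i, B.repr x i • B i) := by rw [B.sum_repr]
          _ = ∑ i, coord i x * fderiv ℝ φ x (B i) := by
            simp only [map_sum, map_smul, smul_eq_mul]
            rfl
    _ = -(finrank ℝ E * ∫ x, φ x ∂μ) := by
        rw [integral_finsetSum _ fun i _ ↦ hint i]
        simp [hparts]

theorem integrable_norm_fderiv_sq {E F : Type*} [NormedAddCommGroup E] [NormedSpace ℝ E]
    [NormedAddCommGroup F] [NormedSpace ℝ F] [MeasurableSpace E] [OpensMeasurableSpace E]
    (μ : Measure E) [IsFiniteMeasureOnCompacts μ] {u : E → F} (hu : ContDiff ℝ 1 u)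
    (hus : HasCompactSupport u) : Integrable (fun x ↦ ‖fderiv ℝ u x‖ ^ 2) μ :=
  ((hu.continuous_fderiv one_ne_zero).memLp_of_hasCompactSupport (p := 2)
    (hus.fderiv (𝕜 := ℝ))).integrable_norm_pow two_ne_zero

variable {E F : Type*} [NormedAddCommGroup E] [InnerProductSpace ℝ E]
  [NormedAddCommGroup F] [InnerProductSpace ℝ F] {u : E → F}

theorem contDiff_norm_sq_div_norm_sq_add (hu : ContDiff ℝ 1 u) {ε : ℝ} (hε : 0 < ε) :
    ContDiff ℝ 1 fun x ↦ ‖u x‖ ^ 2 / (‖x‖ ^ 2 + ε) :=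
  (hu.norm_sq ℝ).div ((contDiff_norm_sq ℝ).add contDiff_const) fun x ↦ by positivity

theorem fderiv_norm_sq_div_norm_sq_add_apply_self {x : E} (hu : DifferentiableAt ℝ u x) {ε : ℝ}
    (hε : 0 < ε) :
    fderiv ℝ (fun x ↦ ‖u x‖ ^ 2 / (‖x‖ ^ 2 + ε)) x x =
      2 * inner ℝ (u x) (fderiv ℝ u x x) / (‖x‖ ^ 2 + ε) -
        2 * (‖u x‖ ^ 2 / (‖x‖ ^ 2 + ε)) * (‖x‖ ^ 2 / (‖x‖ ^ 2 + ε)) := by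
  have hρ : ‖x‖ ^ 2 + ε ≠ 0 := by positivity
  have hden := ((hasFDerivAt_id (𝕜 := ℝ) x).norm_sq).add_const ε
  have hφ := hu.hasFDerivAt.norm_sq.mul ((hasDerivAt_inv hρ).comp_hasFDerivAt x hden)
  calc fderiv ℝ (fun x ↦ ‖u x‖ ^ 2 / (‖x‖ ^ 2 + ε)) x x = _ := by
        simp only [div_eq_mul_inv]
        exact DFunLike.congr_fun hφ.fderiv x
    _ = _ := by
        simp
        field_simp
        ring

theorem neg_mul_fderiv_apply_self_le {x : E} (hu : DifferentiableAt ℝ u x) {c ε : ℝ}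
    (hc : 0 ≤ c) (hε : 0 < ε) :
    -(c * fderiv ℝ (fun x ↦ ‖u x‖ ^ 2 / (‖x‖ ^ 2 + ε)) x x) ≤
      ‖fderiv ℝ u x‖ ^ 2 + (2 * c + c ^ 2) * (‖u x‖ ^ 2 / (‖x‖ ^ 2 + ε)) := by
  have hρ : 0 < ‖x‖ ^ 2 + ε := by positivity
  have hratio : ‖x‖ ^ 2 / (‖x‖ ^ 2 + ε) ≤ 1 := (div_le_one hρ).2 (by linarith)
  have hop : ‖fderiv ℝ u x x‖ ^ 2 / (‖x‖ ^ 2 + ε) ≤ ‖fderiv ℝ u x‖ ^ 2 := by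
    rw [div_le_iff₀ hρ]
    calc ‖fderiv ℝ u x x‖ ^ 2 ≤ (‖fderiv ℝ u x‖ * ‖x‖) ^ 2 := by
          gcongr
          exact (fderiv ℝ u x).le_opNorm x
      _ ≤ ‖fderiv ℝ u x‖ ^ 2 * (‖x‖ ^ 2 + ε) := by
          rw [mul_pow]
          gcongr
          linarith
  have hsq : 0 ≤ (‖fderiv ℝ u x x‖ ^ 2 + 2 * c * inner ℝ (u x) (fderiv ℝ u x x) +
      c ^ 2 * ‖u x‖ ^ 2) / (‖x‖ ^ 2 + ε) := by
    have := norm_add_sq_real (fderiv ℝ u x x) (c • u x)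
    rw [inner_smul_right, real_inner_comm, norm_smul, mul_pow, norm_eq_abs, sq_abs] at this
    refine div_nonneg ?_ hρ.le
    linarith [sq_nonneg ‖fderiv ℝ u x x + c • u x‖]
  have hφ : c * (‖u x‖ ^ 2 / (‖x‖ ^ 2 + ε)) * (‖x‖ ^ 2 / (‖x‖ ^ 2 + ε)) ≤
      c * (‖u x‖ ^ 2 / (‖x‖ ^ 2 + ε)) := mul_le_of_le_one_right (by positivity) hratio
  rw [fderiv_norm_sq_div_norm_sq_add_apply_self hu hε]
  rw [add_div, add_div] at hsq
  linear_combination hsq + hop + 2 * hφ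

variable [FiniteDimensional ℝ E] [MeasurableSpace E] [BorelSpace E] (μ : Measure E)
  [μ.IsAddHaarMeasure]

theorem hardy_inequality_regularized (hn : 2 ≤ finrank ℝ E) (hu : ContDiff ℝ 1 u)
    (hus : HasCompactSupport u) {ε : ℝ} (hε : 0 < ε) :
    Integrable (fun x ↦ ‖u x‖ ^ 2 / (‖x‖ ^ 2 + ε)) μ ∧
      ((finrank ℝ E - 2) / 2 : ℝ) ^ 2 * ∫ x, ‖u x‖ ^ 2 / (‖x‖ ^ 2 + ε) ∂μ ≤
        ∫ x, ‖fderiv ℝ u x‖ ^ 2 ∂μ := by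
  set c : ℝ := (finrank ℝ E - 2) / 2
  set φ : E → ℝ := fun x ↦ ‖u x‖ ^ 2 / (‖x‖ ^ 2 + ε)
  have hc₀ : 0 ≤ c := by
    have : (2 : ℝ) ≤ finrank ℝ E := mod_cast hn
    exact div_nonneg (by linarith) zero_le_two
  have hφ : ContDiff ℝ 1 φ := contDiff_norm_sq_div_norm_sq_add hu hε
  have hφs : HasCompactSupport φ := hus.mono fun x hx ↦ by contrapose! hx; simp_all [φ]
  have hφi : Integrable φ μ := hφ.continuous.integrable_of_hasCompactSupport hφs
  have hdu : Integrable (fun x ↦ ‖fderiv ℝ u x‖ ^ 2) μ := integrable_norm_fderiv_sq μ hu hus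
  have hdφ : Integrable (fun x ↦ -(c * fderiv ℝ φ x x)) μ := by
    have := hφ.continuous_fderiv one_ne_zero
    refine Continuous.integrable_of_hasCompactSupport (by fun_prop)
      ((hφs.fderiv (𝕜 := ℝ)).mono fun x hx ↦ ?_)
    contrapose! hx
    simp_all
  have hmono : ∫ x, -(c * fderiv ℝ φ x x) ∂μ ≤
      ∫ x, (‖fderiv ℝ u x‖ ^ 2 + (2 * c + c ^ 2) * φ x) ∂μ :=
    integral_mono hdφ (hdu.add (hφi.const_mul _)) fun x ↦
      neg_mul_fderiv_apply_self_le (hu.differentiable one_ne_zero x) hc₀ hε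
  refine ⟨hφi, ?_⟩
  rw [integral_neg, integral_const_mul, integral_fderiv_apply_self μ hφ hφs,
    integral_add hdu (hφi.const_mul _), integral_const_mul] at hmono
  linear_combination hmono

theorem hardy_inequality (hn : 2 < finrank ℝ E) (hu : ContDiff ℝ 1 u)
    (hus : HasCompactSupport u) :
    Integrable (fun x ↦ ‖u x‖ ^ 2 / ‖x‖ ^ 2) μ ∧
      ((finrank ℝ E - 2) / 2 : ℝ) ^ 2 * ∫ x, ‖u x‖ ^ 2 / ‖x‖ ^ 2 ∂μ ≤
        ∫ x, ‖fderiv ℝ u x‖ ^ 2 ∂μ := by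
  have hc : 0 < ((finrank ℝ E - 2) / 2 : ℝ) ^ 2 := by
    have : (2 : ℝ) < finrank ℝ E := mod_cast hn
    exact pow_pos (by linarith) 2
  have : Nontrivial E := nontrivial_of_finrank_pos (R := ℝ) (by lia)
  have hreg (k : ℕ) := hardy_inequality_regularized μ hn.le hu hus (Nat.one_div_pos_of_nat (n := k))
  have hlim : ∀ᵐ x ∂μ, Tendsto (fun k : ℕ ↦ ‖u x‖ ^ 2 / (‖x‖ ^ 2 + 1 / ((k : ℝ) + 1))) atTop
      (𝓝 (‖u x‖ ^ 2 / ‖x‖ ^ 2)) := by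
    filter_upwards [Measure.ae_ne μ 0] with x hx
    refine tendsto_const_nhds.div ?_ (by positivity)
    simpa using tendsto_one_div_add_atTop_nhds_zero_nat.const_add (‖x‖ ^ 2)
  have hmeas : Measurable fun x ↦ ‖u x‖ ^ 2 / ‖x‖ ^ 2 :=
    (hu.continuous.norm.pow 2).measurable.div (by fun_prop)
  obtain ⟨hint, hle⟩ := integrable_and_integral_le_of_tendsto (fun k ↦ (hreg k).1)
    (fun k x ↦ by positivity) (fun k ↦ (le_div_iff₀' hc).2 (hreg k).2)
    hmeas.aestronglyMeasurable hlim
  exact ⟨hint, (le_div_iff₀' hc).1 hle⟩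

theorem exists_mul_integral_norm_fderiv_sq_le (F : Type*) [NormedAddCommGroup F]
    [InnerProductSpace ℝ F] (hn : 2 < finrank ℝ E) {b : ℝ}
    (hb : -((finrank ℝ E - 2) / 2 : ℝ) ^ 2 < b) :
    ∃ κ > 0, ∀ u : E → F, ContDiff ℝ 1 u → HasCompactSupport u →
      κ * ∫ x, ‖fderiv ℝ u x‖ ^ 2 ∂μ ≤
        ∫ x, (‖fderiv ℝ u x‖ ^ 2 + b * (‖u x‖ ^ 2 / ‖x‖ ^ 2)) ∂μ := by
  set c : ℝ := ((finrank ℝ E - 2) / 2) ^ 2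
  have hc : 0 < c := by
    have : (2 : ℝ) < finrank ℝ E := mod_cast hn
    exact pow_pos (by linarith) 2
  refine ⟨min 1 (1 + b / c), lt_min one_pos ?_, fun u hu hus ↦ ?_⟩
  · rw [← neg_lt_iff_pos_add', lt_div_iff₀ hc]
    linarith
  obtain ⟨hwi, hardy⟩ := hardy_inequality μ hn hu hus
  rw [integral_add (integrable_norm_fderiv_sq μ hu hus) (hwi.const_mul b), integral_const_mul]
  set D := ∫ x, ‖fderiv ℝ u x‖ ^ 2 ∂μ
  set W := ∫ x, ‖u x‖ ^ 2 / ‖x‖ ^ 2 ∂μ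
  have hD : 0 ≤ D := integral_nonneg fun x ↦ by positivity
  rcases le_total 0 b with hb₀ | hb₀
  · have hW : 0 ≤ W := integral_nonneg fun x ↦ by positivity
    calc min 1 (1 + b / c) * D ≤ 1 * D := mul_le_mul_of_nonneg_right (min_le_left _ _) hD
      _ ≤ D + b * W := by linarith [mul_nonneg hb₀ hW]
  · calc min 1 (1 + b / c) * D ≤ (1 + b / c) * D :=
          mul_le_mul_of_nonneg_right (min_le_right _ _) hD
      _ = D + b * (D / c) := by ring
      _ ≤ D + b * W :=
        add_le_add_right (mul_le_mul_of_nonpos_left ((le_div_iff₀' hc).2 hardy) hb₀) D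

end Hardy

section Choquard

variable {E : Type*} [NormedAddCommGroup E] [NormedSpace ℝ E] [FiniteDimensional ℝ E]
  [MeasurableSpace E] [BorelSpace E] (μ : Measure E)
  [μ.IsAddHaarMeasure] (F : Type*) [NormedAddCommGroup F] [InnerProductSpace ℝ F]

theorem exists_lintegral_enorm_rpow_le_lintegral_enorm_fderiv (hn : 2 < finrank ℝ E) :
    ∃ K : ℝ≥0, ∀ u : E → F, ContDiff ℝ 1 u → HasCompactSupport u →
      ∫⁻ x, ‖u x‖ₑ ^ (2 * finrank ℝ E / (finrank ℝ E - 2) : ℝ) ∂μ ≤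
        K * (∫⁻ x, ‖fderiv ℝ u x‖ₑ ^ (2 : ℝ) ∂μ) ^ (finrank ℝ E / (finrank ℝ E - 2) : ℝ) := by
  have hn₂ : 0 < (finrank ℝ E - 2 : ℝ) := sub_pos.2 (mod_cast hn)
  have : 0 < (finrank ℝ E : ℝ) := by linarith
  obtain ⟨m, hm⟩ : ∃ m : ℝ≥0, (m : ℝ) = 2 * finrank ℝ E / (finrank ℝ E - 2) :=
    ⟨⟨_, by positivity⟩, rfl⟩
  have hm₀ : m ≠ 0 := NNReal.coe_ne_zero.1 (hm ▸ by positivity)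
  refine ⟨eLpNormLESNormFDerivOfEqInnerConst μ (2 : ℝ≥0) ^ (m : ℝ), fun u hu hus ↦ ?_⟩
  have hsob := eLpNorm_le_eLpNorm_fderiv_of_eq_inner μ hu hus (p := 2) (p' := m) one_le_two
    (by lia) (by rw [hm]; simp; field_simp)
  rw [← hm, ← eLpNorm_nnreal_pow_eq_lintegral hm₀]
  refine (ENNReal.rpow_le_rpow hsob m.coe_nonneg).trans_eq ?_
  rw [ENNReal.mul_rpow_of_nonneg _ _ m.coe_nonneg, ENNReal.coe_rpow_of_nonneg _ m.coe_nonneg,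
    ← NNReal.coe_ofNat, ← eLpNorm_nnreal_pow_eq_lintegral two_ne_zero, ← ENNReal.rpow_mul, hm]
  congr 2
  simp [mul_div_assoc]

theorem lintegral_enorm_rpow_ne_top {X F : Type*} [TopologicalSpace X] [MeasurableSpace X]
    [OpensMeasurableSpace X] [NormedAddCommGroup F] (μ : Measure X) [IsFiniteMeasureOnCompacts μ]
    {u : X → F} (hu : Continuous u) (hus : HasCompactSupport u) {t : ℝ} (ht : 0 < t) :
    ∫⁻ x, ‖u x‖ₑ ^ t ∂μ ≠ ∞ := by
  have := lintegral_rpow_enorm_lt_top_of_eLpNorm_lt_top (ENNReal.ofReal_pos.2 ht).ne'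
    ENNReal.ofReal_ne_top (hu.memLp_of_hasCompactSupport (μ := μ) hus).2
  rw [ENNReal.toReal_ofReal ht.le] at this
  exact this.ne

theorem exists_rieszEnergy_rpow_le_lintegral_rpow {lam s a b p : ℝ} (hlam₀ : 0 < lam)
    (hlam : lam < finrank ℝ E) (hs : 2 / s + lam / finrank ℝ E = 2) (hp : 0 < p) (ha : 0 < a)
    (has : a < s * p) (hsb : s * p < b) :
    ∃ K : ℝ≥0, ∀ f : E → ℝ≥0∞, Measurable f → ∫⁻ x, f x ^ a ∂μ ≠ ∞ → ∫⁻ x, f x ^ b ∂μ ≠ ∞ →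
      rieszEnergy μ lam (fun x ↦ f x ^ p) ≤ K * ((∫⁻ x, f x ^ a ∂μ) ^ ((b - s * p) / (b - a)) *
        (∫⁻ x, f x ^ b ∂μ) ^ ((s * p - a) / (b - a))) ^ (2 / s) := by
  obtain ⟨K, hK⟩ := exists_rieszEnergy_le_lintegral_rpow μ hlam₀ hlam hs (div_pos ha hp)
    ((div_lt_iff₀ hp).2 has) ((lt_div_iff₀ hp).2 hsb)
  refine ⟨K, fun f hf hfa hfb ↦ ?_⟩
  have hpow (t : ℝ) (x : E) : (f x ^ p) ^ (t / p) = f x ^ t := by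
    rw [← ENNReal.rpow_mul, mul_div_cancel₀ _ hp.ne']
  have h₁ : (b / p - s) / (b / p - a / p) = (b - s * p) / (b - a) := by field_simp
  have h₂ : (s - a / p) / (b / p - a / p) = (s * p - a) / (b - a) := by field_simp
  simpa only [hpow, h₁, h₂] using
    hK (fun x ↦ f x ^ p) (by fun_prop) (by simpa only [hpow]) (by simpa only [hpow])

theorem choquard_exponents_eq {n α : ℝ} (hn : 0 < n) (hn₂ : n - 2 ≠ 0) (hα : 0 < n + α) (p : ℝ) :
    (2 * n / (n - 2) - 2 * n / (n + α) * p) / (2 * n / (n - 2) - 2) * (2 / (2 * n / (n + α))) =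
        (n + α - n * p + 2 * p) / 2 ∧
      n / (n - 2) * ((2 * n / (n + α) * p - 2) / (2 * n / (n - 2) - 2) *
        (2 / (2 * n / (n + α)))) = (n * p - n - α) / 2 := by
  have hden : 2 * n / (n - 2) - 2 = 4 / (n - 2) := by
    field_simp
    ring
  rw [hden]
  constructor <;> field_simp <;> ring

theorem exists_rieszEnergy_enorm_rpow_le (hn : 2 < finrank ℝ E) {α p : ℝ} (hα₀ : 0 < α)
    (hα : α < finrank ℝ E) (hp₁ : (finrank ℝ E + α) / finrank ℝ E < p)
    (hp₂ : p < (finrank ℝ E + α) / (finrank ℝ E - 2)) :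
    ∃ K : ℝ≥0, ∀ u : E → F, ContDiff ℝ 1 u → HasCompactSupport u →
      rieszEnergy μ (finrank ℝ E - α) (fun x ↦ ‖u x‖ₑ ^ p) ≤
        K * ((∫⁻ x, ‖u x‖ₑ ^ (2 : ℝ) ∂μ) ^ ((finrank ℝ E + α - finrank ℝ E * p + 2 * p) / 2) *
          (∫⁻ x, ‖fderiv ℝ u x‖ₑ ^ (2 : ℝ) ∂μ) ^ ((finrank ℝ E * p - finrank ℝ E - α) / 2)) := by
  obtain ⟨K₁, hK₁⟩ := exists_lintegral_enorm_rpow_le_lintegral_enorm_fderiv μ F hn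
  have hHLS := exists_rieszEnergy_rpow_le_lintegral_rpow μ (lam := finrank ℝ E - α) (p := p)
    (s := 2 * finrank ℝ E / (finrank ℝ E + α)) (a := 2)
    (b := 2 * finrank ℝ E / (finrank ℝ E - 2))
  have hn₂ : 0 < (finrank ℝ E - 2 : ℝ) := sub_pos.2 (mod_cast hn)
  set n := (finrank ℝ E : ℝ)
  have hn₀ : 0 < n := by linarith
  have hp : 0 < p := lt_trans (by positivity) hp₁
  have hlow : n + α < n * p := (div_lt_iff₀' hn₀).1 hp₁
  have hup : (n - 2) * p < n + α := (lt_div_iff₀' hn₂).1 hp₂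
  obtain ⟨hθ₁, hθ₂⟩ := choquard_exponents_eq hn₀ hn₂.ne' (by positivity : 0 < n + α) p
  set m := 2 * n / (n - 2)
  set s := 2 * n / (n + α)
  have hsp : 2 < s * p := by rw [div_mul_eq_mul_div, lt_div_iff₀ (by positivity)]; linarith
  have hsm : s * p < m := by
    rw [div_mul_eq_mul_div, div_lt_div_iff₀ (by positivity) hn₂, mul_assoc]
    gcongr
    linarith
  obtain ⟨K₂, hK₂⟩ := hHLS (by linarith) (by linarith)
    (by simp only [s]; field_simp; ring) hp two_pos hsp hsm
  have hθ : 0 ≤ (s * p - 2) / (m - 2) := div_nonneg (by linarith) (by linarith)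
  refine ⟨K₂ * K₁ ^ ((s * p - 2) / (m - 2) * (2 / s)), fun u hu hus ↦ ?_⟩
  have hfin {t : ℝ} (ht : 0 < t) := lintegral_enorm_rpow_ne_top μ hu.continuous hus ht
  refine (hK₂ _ hu.continuous.enorm.measurable (hfin two_pos) (hfin (by positivity))).trans ?_
  grw [hK₁ u hu hus]
  rw [ENNReal.mul_rpow_of_nonneg _ _ (by positivity), ENNReal.mul_rpow_of_nonneg _ _ hθ,
    ENNReal.mul_rpow_of_nonneg _ _ (by positivity), ← ENNReal.rpow_mul, ← ENNReal.rpow_mul,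
    ← ENNReal.rpow_mul, ← ENNReal.rpow_mul, hθ₁, hθ₂, ENNReal.coe_mul,
    ENNReal.coe_rpow_of_nonneg _ (by positivity)]
  exact le_of_eq (by ring)

theorem lintegral_enorm_rpow_two_eq_ofReal {X G : Type*} [MeasurableSpace X]
    [NormedAddCommGroup G] {μ : Measure X} {f : X → G} (hf : Integrable (fun x ↦ ‖f x‖ ^ 2) μ) :
    ∫⁻ x, ‖f x‖ₑ ^ (2 : ℝ) ∂μ = ENNReal.ofReal (∫ x, ‖f x‖ ^ 2 ∂μ) := by
  rw [ofReal_integral_eq_lintegral_ofReal hf (.of_forall fun x ↦ by positivity)]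
  refine lintegral_congr fun x ↦ ?_
  rw [ENNReal.rpow_two, ← ofReal_norm, ENNReal.ofReal_pow (norm_nonneg _)]

theorem exists_rieszEnergy_enorm_rpow_le_ofReal (hn : 2 < finrank ℝ E) {α p : ℝ} (hα₀ : 0 < α)
    (hα : α < finrank ℝ E) (hp₁ : (finrank ℝ E + α) / finrank ℝ E < p)
    (hp₂ : p < (finrank ℝ E + α) / (finrank ℝ E - 2)) :
    ∃ K : ℝ≥0, ∀ u : E → F, ContDiff ℝ 1 u → HasCompactSupport u →
      rieszEnergy μ (finrank ℝ E - α) (fun x ↦ ‖u x‖ₑ ^ p) ≤ ENNReal.ofReal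
        (K * √(∫ x, ‖u x‖ ^ 2 ∂μ) ^ (finrank ℝ E + α - finrank ℝ E * p + 2 * p) *
          (∫ x, ‖fderiv ℝ u x‖ ^ 2 ∂μ) ^ ((finrank ℝ E * p - finrank ℝ E - α) / 2)) := by
  obtain ⟨K, hK⟩ := exists_rieszEnergy_enorm_rpow_le μ F hn hα₀ hα hp₁ hp₂
  refine ⟨K, fun u hu hus ↦ (hK u hu hus).trans_eq ?_⟩
  rw [lintegral_enorm_rpow_two_eq_ofReal (integrable_norm_fderiv_sq μ hu hus),
    lintegral_enorm_rpow_two_eq_ofReal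
      ((hu.continuous.memLp_of_hasCompactSupport (p := 2) hus).integrable_norm_pow two_ne_zero)]
  have hn₂ : 0 < (finrank ℝ E - 2 : ℝ) := sub_pos.2 (mod_cast hn)
  have hlow : finrank ℝ E + α < finrank ℝ E * p := (div_lt_iff₀' (by linarith)).1 hp₁
  have hup : (finrank ℝ E - 2) * p < finrank ℝ E + α := (lt_div_iff₀' hn₂).1 hp₂
  have hX : 0 ≤ ∫ x, ‖u x‖ ^ 2 ∂μ := integral_nonneg fun x ↦ by positivity
  have hD : 0 ≤ ∫ x, ‖fderiv ℝ u x‖ ^ 2 ∂μ := integral_nonneg fun x ↦ by positivity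
  rw [ENNReal.ofReal_rpow_of_nonneg hX (by linarith),
    ENNReal.ofReal_rpow_of_nonneg hD (by linarith), mul_assoc, ENNReal.ofReal_mul (by positivity),
    ENNReal.ofReal_mul (by positivity), ENNReal.ofReal_coe_nnreal, Real.sqrt_eq_rpow,
    ← Real.rpow_mul hX, one_div_mul_eq_div]

theorem exists_integral_rieszPotential_mul_le (A : ℝ) (hn : 2 < finrank ℝ E) {α p : ℝ}
    (hα₀ : 0 < α) (hα : α < finrank ℝ E) (hp₁ : (finrank ℝ E + α) / finrank ℝ E < p)
    (hp₂ : p < (finrank ℝ E + α) / (finrank ℝ E - 2)) :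
    ∃ C > 0, ∀ u : E → F, ContDiff ℝ 1 u → HasCompactSupport u →
      ∫ x, (∫ y, A * ‖x - y‖ ^ (α - finrank ℝ E) * ‖u y‖ ^ p ∂μ) * ‖u x‖ ^ p ∂μ ≤
        C * √(∫ x, ‖u x‖ ^ 2 ∂μ) ^ (finrank ℝ E + α - finrank ℝ E * p + 2 * p) *
          (∫ x, ‖fderiv ℝ u x‖ ^ 2 ∂μ) ^ ((finrank ℝ E * p - finrank ℝ E - α) / 2) := by
  obtain ⟨K, hK⟩ := exists_rieszEnergy_enorm_rpow_le_ofReal μ F hn hα₀ hα hp₁ hp₂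
  have hp : 0 < p := lt_trans (by positivity) hp₁
  refine ⟨|A| * K + 1, by positivity, fun u hu hus ↦ ?_⟩
  have henergy := enorm_integral_integral_mul_le_rieszEnergy μ A (finrank ℝ E - α)
    fun x ↦ ‖u x‖ ^ p
  simp only [neg_sub, Real.enorm_rpow_of_nonneg (norm_nonneg _) hp.le, enorm_norm] at henergy
  refine (le_norm_self _).trans ?_
  rw [← ENNReal.ofReal_le_ofReal_iff (by positivity), ofReal_norm]
  refine (henergy.trans (mul_le_mul_right (hK u hu hus) _)).trans ?_
  rw [Real.enorm_eq_ofReal_abs, ← ENNReal.ofReal_mul (abs_nonneg A), ← mul_assoc, ← mul_assoc]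
  gcongr
  exact le_add_of_nonneg_right zero_le_one

end Choquard

section Euclidean

variable {N : ℕ} {F : Type*} [NormedAddCommGroup F]

theorem norm_fderiv_sq_le_gradSq [NormedSpace ℝ F] (u : EuclideanSpace ℝ (Fin N) → F)
    (x : EuclideanSpace ℝ (Fin N)) : ‖fderiv ℝ u x‖ ^ 2 ≤ gradSq u x := by
  have hgrad : 0 ≤ gradSq u x := Finset.sum_nonneg fun i _ ↦ by positivity
  rw [← Real.le_sqrt (norm_nonneg _) hgrad]
  refine ContinuousLinearMap.opNorm_le_bound _ (Real.sqrt_nonneg _) fun v ↦ ?_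
  have hv : v = ∑ i, v i • EuclideanSpace.single i (1 : ℝ) := by
    ext j
    simp [Pi.single_apply]
  calc ‖fderiv ℝ u x v‖ = ‖∑ i, v i • fderiv ℝ u x (EuclideanSpace.single i 1)‖ := by
        conv_lhs => rw [hv]
        simp only [map_sum, map_smul]
    _ ≤ ∑ i, ‖fderiv ℝ u x (EuclideanSpace.single i 1)‖ * ‖v i‖ :=
        (norm_sum_le _ _).trans_eq <| Finset.sum_congr rfl fun i _ ↦ by rw [norm_smul, mul_comm]
    _ ≤ √(gradSq u x) * √(∑ i, ‖v i‖ ^ 2) := Real.sum_mul_le_sqrt_mul_sqrt _ _ _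
    _ = √(gradSq u x) * ‖v‖ := by rw [EuclideanSpace.norm_eq v]

theorem integrable_gradSq [NormedSpace ℝ F] {u : EuclideanSpace ℝ (Fin N) → F}
    (hu : ContDiff ℝ 1 u) (hus : HasCompactSupport u) : Integrable (gradSq u) :=
  integrable_finsetSum _ fun i _ ↦
    (((hu.continuous_fderiv one_ne_zero).clm_apply continuous_const).memLp_of_hasCompactSupport
      (p := 2) (hus.fderiv_apply (𝕜 := ℝ) (EuclideanSpace.single i 1))).integrable_norm_pow
        two_ne_zero

variable [InnerProductSpace ℝ F]

theorem integral_norm_fderiv_sq_add_le_integral_gradSq_add (hN : 2 < N)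
    {u : EuclideanSpace ℝ (Fin N) → F} (hu : ContDiff ℝ 1 u) (hus : HasCompactSupport u) (b : ℝ) :
    ∫ x, (‖fderiv ℝ u x‖ ^ 2 + b * (‖u x‖ ^ 2 / ‖x‖ ^ 2)) ≤
      ∫ x, (gradSq u x + b * ‖u x‖ ^ 2 / ‖x‖ ^ 2) := by
  simp only [mul_div_assoc]
  have hpot : Integrable fun x ↦ b * (‖u x‖ ^ 2 / ‖x‖ ^ 2) :=
    (hardy_inequality volume (by simpa using hN) hu hus).1.const_mul b
  exact integral_mono ((integrable_norm_fderiv_sq volume hu hus).add hpot)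
    ((integrable_gradSq hu hus).add hpot) fun x ↦ add_le_add_left (norm_fderiv_sq_le_gradSq u x) _

variable (F) in
theorem gagliardo_nirenberg_choquard_general (hN : 3 ≤ N) {α p b : ℝ}
    (hα₀ : 0 < α) (hα : α < N) (hp₁ : ((N : ℝ) + α) / N < p)
    (hp₂ : p < ((N : ℝ) + α) / ((N : ℝ) - 2)) (hb : -(((N : ℝ) - 2) ^ 2 / 4) < b) :
    ∃ C > 0, ∀ u : EuclideanSpace ℝ (Fin N) → F, ContDiff ℝ 1 u → HasCompactSupport u →
      ∫ x, (∫ y, rieszConst N α * ‖x - y‖ ^ (α - (N : ℝ)) * ‖u y‖ ^ p) * ‖u x‖ ^ p ≤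
        C * Real.sqrt (∫ x, ‖u x‖ ^ 2) ^ ((N : ℝ) + α - N * p + 2 * p) *
          (∫ x, (gradSq u x + b * ‖u x‖ ^ 2 / ‖x‖ ^ 2)) ^ (((N : ℝ) * p - N - α) / 2) := by
  have hdim : finrank ℝ (EuclideanSpace ℝ (Fin N)) = N := finrank_euclideanSpace_fin
  have hlow : (N : ℝ) + α < N * p := (div_lt_iff₀' (hα₀.trans hα)).1 hp₁
  obtain ⟨C, hC, hchoquard⟩ := exists_integral_rieszPotential_mul_le
    (volume : Measure (EuclideanSpace ℝ (Fin N))) F (rieszConst N α) (p := p)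
    (by rwa [hdim]) hα₀ (by rwa [hdim]) (by rwa [hdim]) (by rwa [hdim])
  obtain ⟨κ, hκ, hcoercive⟩ := exists_mul_integral_norm_fderiv_sq_le
    (volume : Measure (EuclideanSpace ℝ (Fin N))) F (b := b) (by rwa [hdim])
    (by rw [hdim]; linear_combination hb)
  simp only [hdim] at hchoquard
  refine ⟨C * κ⁻¹ ^ ((N * p - N - α) / 2), by positivity, fun u hu hus ↦ ?_⟩
  set Q := ∫ x, (gradSq u x + b * ‖u x‖ ^ 2 / ‖x‖ ^ 2)
  have hgrad : ∫ x, ‖fderiv ℝ u x‖ ^ 2 ≤ κ⁻¹ * Q := (le_inv_mul_iff₀ hκ).2 <|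
    (hcoercive u hu hus).trans (integral_norm_fderiv_sq_add_le_integral_gradSq_add hN hu hus b)
  have hgrad₀ : 0 ≤ ∫ x, ‖fderiv ℝ u x‖ ^ 2 := integral_nonneg fun x ↦ by positivity
  have hQ : 0 ≤ Q := nonneg_of_mul_nonneg_right (hgrad₀.trans hgrad) (inv_pos.2 hκ)
  have hpow : (∫ x, ‖fderiv ℝ u x‖ ^ 2) ^ ((N * p - N - α) / 2) ≤
      κ⁻¹ ^ ((N * p - N - α) / 2) * Q ^ ((N * p - N - α) / 2) := by
    rw [← Real.mul_rpow (inv_nonneg.2 hκ.le) hQ]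
    exact Real.rpow_le_rpow hgrad₀ hgrad (by linarith)
  refine (hchoquard u hu hus).trans ((mul_le_mul_of_nonneg_left hpow (by positivity)).trans_eq ?_)
  ring

end Euclidean

/-- Gagliardo–Nirenberg-type inequality for the Choquard nonlinearity with
inverse-square potential:
`∫ (I_α∗|u|^p)|u|^p ≤ C ‖u‖_{L²}^{N+α−Np+2p} (∫(|∇u|² + b|u|²/|x|²))^{(Np−N−α)/2}`. -/
theorem gagliardo_nirenberg_choquard (N : ℕ) (hN : 3 ≤ N) (α p b : ℝ)
    (hα0 : 0 < α) (hαN : α < N)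
    (hp1 : ((N : ℝ) + α) / N < p) (hp2 : p < ((N : ℝ) + α) / ((N : ℝ) - 2))
    (hb : -(((N : ℝ) - 2) ^ 2 / 4) < b) :
    ∃ C > 0, ∀ u : EuclideanSpace ℝ (Fin N) → ℂ,
      ContDiff ℝ (⊤ : ℕ∞) u → HasCompactSupport u →
      choquardTerm N α p u ≤
        C * Real.sqrt (∫ x, ‖u x‖ ^ 2) ^ ((N : ℝ) + α - N * p + 2 * p) *
          (∫ x, (gradSq u x + b * ‖u x‖ ^ 2 / ‖x‖ ^ 2)) ^ (((N : ℝ) * p - N - α) / 2) := by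
  obtain ⟨C, hC, h⟩ := gagliardo_nirenberg_choquard_general ℂ hN hα0 hαN hp1 hp2 hb
  exact ⟨C, hC, fun u hu hus ↦ h u (hu.of_le (by simp)) hus⟩
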